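/- arXiv:1810.00877 — 2 statements merged into one kernel-verified Lean document; each statement's English description precedes it below -/
import Mathlib

section
/- Fix ε > 0 and Δ > 0. Then the minimum noise power satisfies liminf_{δ → 0⁺} V_opt^{L2}(ε, δ, Δ) ≥ (1 + e^ε)·Δ²/(e^ε − 1)² and limsup_{δ → 0⁺} V_opt^{L2}(ε, δ, Δ) ≤ 2Δ²/ε², so the multiplicative gap between these limiting lower and upper bounds is ε²(1 + e^ε)/(2(e^ε − 1)²) = 1 − ε/2 + O(ε²). -/
open MeasureTheory Real Filter Topology

/-- The (ε,δ)-differential-privacy constraint with sensitivity `Δ` on a noise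
distribution `P` on ℝ. -/
def SatisfiesDP (ε δ Δ : ℝ) (P : Measure ℝ) : Prop :=
  ∀ d : ℝ, |d| ≤ Δ → ∀ S : Set ℝ, MeasurableSet S →
    P S ≤ ENNReal.ofReal (Real.exp ε) * P ((fun s => s + d) '' S) + ENNReal.ofReal δ

/-- The minimum noise power. -/
noncomputable def VoptL2 (ε δ Δ : ℝ) : ENNReal :=
  ⨅ (P : Measure ℝ) (_ : IsProbabilityMeasure P) (_ : SatisfiesDP ε δ Δ P),
    ∫⁻ x : ℝ, ENNReal.ofReal (x ^ 2) ∂P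

/-!
Fix a constraint `(ε, δ)` with sensitivity `Δ`. Shifting the half-lines `[t, ∞)` and `(-∞, -t]`
outwards by `Δ` shows that the tails `T t = P {x | t ≤ |x|}` satisfy
`T t ≤ e^ε * T (t + Δ) + 2 * δ`. Iterating from `T 0 = 1` bounds each `T (k * Δ)` from below by a
quantity which tends to `e^(-k * ε)` as `δ → 0`. Since `x ^ 2` dominates the staircase
`∑ (2 * k + 1) * Δ ^ 2` over the `k` with `(k + 1) * Δ ≤ |x|`, the second moment of `P` is at least
`∑ (2 * k + 1) * Δ ^ 2 * T ((k + 1) * Δ)`, and Fatou's lemma for sums gives the bound on the liminf.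
For the limsup, the Laplace distribution of rate `ε / Δ` satisfies the constraint for every `δ` and
has second moment `2 * Δ ^ 2 / ε ^ 2`.
-/

open scoped ENNReal Nat

theorem le_pow_mul_add_mul_sum_pow_of_le_mul_succ_add {R : Type*} [CommSemiring R]
    [PartialOrder R] [IsOrderedRing R] {f : ℕ → R} {a b : R} (ha : 0 ≤ a)
    (hf : ∀ n, f n ≤ a * f (n + 1) + b) (n : ℕ) :
    f 0 ≤ a ^ n * f n + b * ∑ j ∈ Finset.range n, a ^ j := by
  induction n with
  | zero => simp
  | succ n ih =>
    calc f 0 ≤ a ^ n * f n + b * ∑ j ∈ Finset.range n, a ^ j := ih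
      _ ≤ a ^ n * (a * f (n + 1) + b) + b * ∑ j ∈ Finset.range n, a ^ j := by
        gcongr
        exact hf n
      _ = a ^ (n + 1) * f (n + 1) + b * ∑ j ∈ Finset.range (n + 1), a ^ j := by
        rw [Finset.sum_range_succ]
        ring

theorem sum_range_two_mul_add_one {R : Type*} [CommSemiring R] (n : ℕ) :
    ∑ k ∈ Finset.range n, (2 * (k : R) + 1) = (n : R) ^ 2 := by
  induction n with
  | zero => simp
  | succ n ih =>
    rw [Finset.sum_range_succ, ih]
    push_cast
    ring

theorem sum_range_ite_two_mul_add_one_mul_sq_le_sq {R : Type*} [CommSemiring R] [LinearOrder R]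
    [IsOrderedRing R] {c t : R} (hc : 0 ≤ c) (ht : 0 ≤ t) (n : ℕ) :
    ∑ k ∈ Finset.range n, (if ((k : R) + 1) * c ≤ t then (2 * (k : R) + 1) * c ^ 2 else 0)
      ≤ t ^ 2 := by
  have hodd (k : ℕ) : 0 ≤ 2 * (k : R) + 1 := by exact_mod_cast (2 * k + 1).cast_nonneg (α := R)
  induction n with
  | zero => simpa using pow_nonneg ht 2
  | succ n ih =>
    by_cases hn : ((n : R) + 1) * c ≤ t
    · calc
        _ ≤ ∑ k ∈ Finset.range (n + 1), (2 * (k : R) + 1) * c ^ 2 := by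
          gcongr with k
          split_ifs
          · exact le_rfl
          · exact mul_nonneg (hodd k) (pow_nonneg hc 2)
        _ = (((n : R) + 1) * c) ^ 2 := by
          rw [← Finset.sum_mul, sum_range_two_mul_add_one, mul_pow]
          push_cast
          rfl
        _ ≤ t ^ 2 := pow_le_pow_left₀ (mul_nonneg (by exact_mod_cast (n + 1).cast_nonneg) hc) hn 2
    · rwa [Finset.sum_range_succ, if_neg hn, add_zero]

theorem hasSum_two_mul_add_one_mul_pow_succ {𝕜 : Type*} [NormedField 𝕜] {b : 𝕜}
    (hb : ‖b‖ < 1) :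
    HasSum (fun k : ℕ => (2 * (k : 𝕜) + 1) * b ^ (k + 1)) (b * (1 + b) / (1 - b) ^ 2) := by
  have hterm (k : ℕ) : (2 * (k : 𝕜) + 1) * b ^ (k + 1) = 2 * b * (k * b ^ k) + b * b ^ k := by
    ring
  have hval : b * (1 + b) / (1 - b) ^ 2 = 2 * b * (b / (1 - b) ^ 2) + b * (1 - b)⁻¹ := by
    field_simp
    ring
  simp_rw [hterm, hval]
  exact ((hasSum_coe_mul_geometric_of_norm_lt_one hb).mul_left (2 * b)).add
    ((hasSum_geometric_of_norm_lt_one hb).mul_left b)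

theorem hasSum_two_mul_add_one_mul_exp_neg_pow_succ {ε : ℝ} (hε : 0 < ε) :
    HasSum (fun k : ℕ => (2 * (k : ℝ) + 1) * exp (-ε) ^ (k + 1))
      ((1 + exp ε) / (exp ε - 1) ^ 2) := by
  have hval : exp (-ε) * (1 + exp (-ε)) / (1 - exp (-ε)) ^ 2 = (1 + exp ε) / (exp ε - 1) ^ 2 := by
    have hinv : 1 - (exp ε)⁻¹ = (exp ε - 1) / exp ε := by field_simp
    rw [exp_neg, hinv]
    field_simp
    ring
  exact hval ▸ hasSum_two_mul_add_one_mul_pow_succ (by simpa using hε)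

theorem tsum_mul_measure_le_lintegral_sq {α : Type*} [MeasurableSpace α] (μ : Measure α)
    {f : α → ℝ≥0∞} (hf : Measurable f) (c : ℝ≥0∞) :
    ∑' k : ℕ, (2 * (k : ℝ≥0∞) + 1) * c ^ 2 * μ {x | ((k : ℝ≥0∞) + 1) * c ≤ f x}
      ≤ ∫⁻ x, f x ^ 2 ∂μ := by
  have hmeas (k : ℕ) : MeasurableSet {x | ((k : ℝ≥0∞) + 1) * c ≤ f x} :=
    measurableSet_le measurable_const hf
  calc
    _ = ∑' k : ℕ, ∫⁻ x, {x | ((k : ℝ≥0∞) + 1) * c ≤ f x}.indicator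
          (fun _ => (2 * (k : ℝ≥0∞) + 1) * c ^ 2) x ∂μ := by
      simp_rw [lintegral_indicator_const (hmeas _)]
    _ = ∫⁻ x, ∑' k : ℕ, {x | ((k : ℝ≥0∞) + 1) * c ≤ f x}.indicator
          (fun _ => (2 * (k : ℝ≥0∞) + 1) * c ^ 2) x ∂μ :=
      (lintegral_tsum fun k => (measurable_const.indicator (hmeas k)).aemeasurable).symm
    _ ≤ ∫⁻ x, f x ^ 2 ∂μ := by
      gcongr with x
      exact ENNReal.tsum_le_of_sum_range_le fun n => by
        simpa only [Set.indicator_apply, Set.mem_ofPred_eq] using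
          sum_range_ite_two_mul_add_one_mul_sq_le_sq (zero_le (a := c)) (zero_le (a := f x)) n

theorem setOf_le_abs {G : Type*} [AddCommGroup G] [LinearOrder G] [IsOrderedAddMonoid G] (t : G) :
    {x : G | t ≤ |x|} = Set.Ici t ∪ Set.Iic (-t) := by
  ext x
  simp [le_abs, le_neg]

theorem disjoint_Ici_Iic_neg {G : Type*} [AddCommGroup G] [LinearOrder G] [IsOrderedAddMonoid G]
    {t : G} (ht : 0 < t) : Disjoint (Set.Ici t) (Set.Iic (-t)) :=
  Set.Ici_disjoint_Iic.2 (neg_lt_self ht).not_ge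

/-- The lower bound on the tail `P {x | k * Δ ≤ |x|}` of an `(ε, δ)`-private noise distribution
obtained by iterating the tail recursion `k` times. Subtraction is truncated, so the bound
is `0` when `0 < k` and `δ` is large. -/
noncomputable def dpTailBound (ε δ : ℝ) (k : ℕ) : ℝ≥0∞ :=
  (1 - 2 * ENNReal.ofReal δ * ∑ j ∈ Finset.range k, ENNReal.ofReal (exp ε) ^ j) /
    ENNReal.ofReal (exp ε) ^ k

theorem dpTailBound_zero (ε : ℝ) (k : ℕ) :
    dpTailBound ε 0 k = ENNReal.ofReal (exp (-ε) ^ k) := by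
  simp [dpTailBound, exp_neg, ENNReal.ofReal_inv_of_pos, exp_pos, ENNReal.ofReal_pow,
    (exp_pos _).le, ENNReal.inv_pow]

theorem continuous_dpTailBound (ε : ℝ) (k : ℕ) : Continuous fun δ => dpTailBound ε δ k := by
  have hsum : ∑ j ∈ Finset.range k, ENNReal.ofReal (exp ε) ^ j ≠ ∞ :=
    ENNReal.sum_ne_top.2 fun _ _ => ENNReal.pow_ne_top ENNReal.ofReal_ne_top
  have hpow : ENNReal.ofReal (exp ε) ^ k ≠ 0 :=
    pow_ne_zero _ (ENNReal.ofReal_pos.2 (exp_pos ε)).ne'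
  exact (ENNReal.continuous_div_const _ hpow).comp <|
    (ENNReal.continuous_sub_left ENNReal.one_ne_top).comp <|
    (ENNReal.continuous_mul_const hsum).comp <|
    (ENNReal.continuous_const_mul ENNReal.ofNat_ne_top).comp ENNReal.continuous_ofReal

/-- The lower bound on the second moment of an `(ε, δ)`-private noise distribution with sensitivity
`Δ` obtained by inserting `dpTailBound` into the staircase minorant of `x ^ 2` of step `Δ`. -/
noncomputable def dpSecondMomentBound (ε δ Δ : ℝ) : ℝ≥0∞ :=
  ∑' k : ℕ, (2 * (k : ℝ≥0∞) + 1) * ENNReal.ofReal Δ ^ 2 * dpTailBound ε δ (k + 1)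

theorem dpSecondMomentBound_zero {ε Δ : ℝ} (hε : 0 < ε) (hΔ : 0 ≤ Δ) :
    dpSecondMomentBound ε 0 Δ = ENNReal.ofReal ((1 + exp ε) * Δ ^ 2 / (exp ε - 1) ^ 2) := by
  have hsum := (hasSum_two_mul_add_one_mul_exp_neg_pow_succ hε).mul_left (Δ ^ 2)
  rw [mul_comm (1 + exp ε), mul_div_assoc, ← hsum.tsum_eq,
    ENNReal.ofReal_tsum_of_nonneg (fun k => by positivity) hsum.summable]
  refine tsum_congr fun k => ?_
  rw [dpTailBound_zero, ENNReal.ofReal_mul (by positivity), ENNReal.ofReal_mul (by positivity),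
    ENNReal.ofReal_pow hΔ, ENNReal.ofReal_add (by positivity) zero_le_one,
    ENNReal.ofReal_mul zero_le_two]
  simp only [ENNReal.ofReal_ofNat, ENNReal.ofReal_natCast, ENNReal.ofReal_one]
  ring

theorem lowerSemicontinuous_dpSecondMomentBound (ε Δ : ℝ) :
    LowerSemicontinuous fun δ => dpSecondMomentBound ε δ Δ := by
  have hcoeff (k : ℕ) : (2 * (k : ℝ≥0∞) + 1) * ENNReal.ofReal Δ ^ 2 ≠ ∞ := by finiteness
  exact lowerSemicontinuous_tsum fun k =>
    ((ENNReal.continuous_const_mul (hcoeff k)).comp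
      (continuous_dpTailBound ε (k + 1))).lowerSemicontinuous

namespace SatisfiesDP

variable {ε δ Δ : ℝ} {P : Measure ℝ}

theorem measure_le_abs_le (h : SatisfiesDP ε δ Δ P) (hΔ : 0 < Δ) {t : ℝ} (ht : 0 ≤ t) :
    P {x | t ≤ |x|}
      ≤ ENNReal.ofReal (exp ε) * P {x | t + Δ ≤ |x|} + 2 * ENNReal.ofReal δ := by
  have hright := h Δ (abs_of_pos hΔ).le (Set.Ici t) measurableSet_Ici
  have hleft := h (-Δ) (by rw [abs_neg, abs_of_pos hΔ]) (Set.Iic (-t)) measurableSet_Iic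
  rw [Set.image_add_const_Ici] at hright
  rw [Set.image_add_const_Iic, ← neg_add] at hleft
  rw [setOf_le_abs, setOf_le_abs,
    measure_union (disjoint_Ici_Iic_neg (add_pos_of_nonneg_of_pos ht hΔ)) measurableSet_Iic]
  calc P (Set.Ici t ∪ Set.Iic (-t))
    _ ≤ P (Set.Ici t) + P (Set.Iic (-t)) := measure_union_le _ _
    _ ≤ (ENNReal.ofReal (exp ε) * P (Set.Ici (t + Δ)) + ENNReal.ofReal δ) +
          (ENNReal.ofReal (exp ε) * P (Set.Iic (-(t + Δ))) + ENNReal.ofReal δ) :=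
      add_le_add hright hleft
    _ = ENNReal.ofReal (exp ε) * (P (Set.Ici (t + Δ)) + P (Set.Iic (-(t + Δ)))) +
          2 * ENNReal.ofReal δ := by ring

theorem dpTailBound_le [IsProbabilityMeasure P] (h : SatisfiesDP ε δ Δ P) (hΔ : 0 < Δ) (k : ℕ) :
    dpTailBound ε δ k ≤ P {x | k * Δ ≤ |x|} := by
  refine ENNReal.div_le_of_le_mul' (tsub_le_iff_right.2 ?_)
  have hrec (n : ℕ) : P {x | n * Δ ≤ |x|}
      ≤ ENNReal.ofReal (exp ε) * P {x | (n + 1 : ℕ) * Δ ≤ |x|} + 2 * ENNReal.ofReal δ := by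
    simpa only [Nat.cast_add_one, add_one_mul] using h.measure_le_abs_le hΔ (t := n * Δ)
      (by positivity)
  simpa using le_pow_mul_add_mul_sum_pow_of_le_mul_succ_add zero_le hrec k

theorem dpSecondMomentBound_le [IsProbabilityMeasure P] (h : SatisfiesDP ε δ Δ P) (hΔ : 0 < Δ) :
    dpSecondMomentBound ε δ Δ ≤ ∫⁻ x, ENNReal.ofReal (x ^ 2) ∂P := by
  have hset (k : ℕ) : {x : ℝ | (k + 1 : ℕ) * Δ ≤ |x|}
      = {x : ℝ | ((k : ℝ≥0∞) + 1) * ENNReal.ofReal Δ ≤ ‖x‖ₑ} := by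
    ext x
    rw [Set.mem_ofPred_eq, Set.mem_ofPred_eq, Real.enorm_eq_ofReal_abs, ← Nat.cast_add_one,
      ← ENNReal.ofReal_natCast, ← ENNReal.ofReal_mul (Nat.cast_nonneg _),
      ENNReal.ofReal_le_ofReal_iff (abs_nonneg x)]
  calc
    _ ≤ ∑' k : ℕ, (2 * (k : ℝ≥0∞) + 1) * ENNReal.ofReal Δ ^ 2 *
          P {x | ((k : ℝ≥0∞) + 1) * ENNReal.ofReal Δ ≤ ‖x‖ₑ} := by
      unfold dpSecondMomentBound
      gcongr with k
      exact hset k ▸ h.dpTailBound_le hΔ (k + 1)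
    _ ≤ ∫⁻ x, ‖x‖ₑ ^ 2 ∂P := tsum_mul_measure_le_lintegral_sq P measurable_enorm _
    _ = ∫⁻ x, ENNReal.ofReal (x ^ 2) ∂P := by
      simp_rw [Real.enorm_eq_ofReal_abs, ← ENNReal.ofReal_pow (abs_nonneg _), sq_abs]

end SatisfiesDP

theorem dpSecondMomentBound_le_VoptL2 (ε δ : ℝ) {Δ : ℝ} (hΔ : 0 < Δ) :
    dpSecondMomentBound ε δ Δ ≤ VoptL2 ε δ Δ :=
  le_iInf fun _ => le_iInf fun _ => le_iInf fun hP => hP.dpSecondMomentBound_le hΔ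

theorem le_liminf_VoptL2 {ε Δ : ℝ} (hε : 0 < ε) (hΔ : 0 < Δ) :
    ENNReal.ofReal ((1 + exp ε) * Δ ^ 2 / (exp ε - 1) ^ 2)
      ≤ liminf (fun δ => VoptL2 ε δ Δ) (𝓝[>] 0) :=
  calc ENNReal.ofReal ((1 + exp ε) * Δ ^ 2 / (exp ε - 1) ^ 2)
    _ = dpSecondMomentBound ε 0 Δ := (dpSecondMomentBound_zero hε hΔ.le).symm
    _ ≤ liminf (fun δ => dpSecondMomentBound ε δ Δ) (𝓝[>] 0) :=
      ((lowerSemicontinuous_dpSecondMomentBound ε Δ).lowerSemicontinuousWithinAt _ 0).le_liminf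
    _ ≤ liminf (fun δ => VoptL2 ε δ Δ) (𝓝[>] 0) :=
      liminf_le_liminf (.of_forall fun δ => dpSecondMomentBound_le_VoptL2 ε δ hΔ)

theorem satisfiesDP_withDensity {ε Δ : ℝ} {μ : Measure ℝ} [μ.IsAddRightInvariant] {f : ℝ → ℝ≥0∞}
    (hf : ∀ d, |d| ≤ Δ → ∀ x, f x ≤ ENNReal.ofReal (exp ε) * f (x + d)) (δ : ℝ) :
    SatisfiesDP ε δ Δ (μ.withDensity f) := by
  refine fun d hd S hS => le_add_of_le_of_nonneg ?_ zero_le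
  calc μ.withDensity f S = ∫⁻ x in S, f x ∂μ := withDensity_apply f hS
    _ ≤ ∫⁻ x in S, ENNReal.ofReal (exp ε) * f (x + d) ∂μ := lintegral_mono (hf d hd)
    _ = ENNReal.ofReal (exp ε) * ∫⁻ x in S, f (x + d) ∂μ :=
      lintegral_const_mul' _ _ ENNReal.ofReal_ne_top
    _ = ENNReal.ofReal (exp ε) * μ.withDensity f ((fun s => s + d) '' S) := by
      rw [(measurePreserving_add_right μ d).setLIntegral_comp_emb (measurableEmbedding_addRight d),
        withDensity_apply f ((measurableEmbedding_addRight d).measurableSet_image.2 hS)]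

/-- The density of the centred Laplace distribution, parametrized by its rate `r`, the inverse of
the usual scale parameter. -/
noncomputable def laplacePDFReal (r x : ℝ) : ℝ :=
  r / 2 * exp (-(r * |x|))

/-- The centred Laplace distribution with rate `r`, a probability measure for `0 < r`, whose second
moment bounds the minimum noise power from above. -/
noncomputable def laplaceMeasure (r : ℝ) : Measure ℝ :=
  volume.withDensity fun x => ENNReal.ofReal (laplacePDFReal r x)

section Laplace

variable {r : ℝ}

theorem laplacePDFReal_nonneg (hr : 0 ≤ r) (x : ℝ) : 0 ≤ laplacePDFReal r x := by
  unfold laplacePDFReal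
  positivity

theorem measurable_laplacePDFReal (r : ℝ) : Measurable (laplacePDFReal r) := by
  unfold laplacePDFReal
  fun_prop

theorem laplacePDFReal_le_exp_mul (hr : 0 ≤ r) (x d : ℝ) :
    laplacePDFReal r x ≤ exp (r * |d|) * laplacePDFReal r (x + d) := by
  have habs : r * |x + d| ≤ r * (|x| + |d|) := mul_le_mul_of_nonneg_left (abs_add_le x d) hr
  calc laplacePDFReal r x ≤ r / 2 * exp (r * |d| + -(r * |x + d|)) := by
        unfold laplacePDFReal
        gcongr
        linarith
    _ = exp (r * |d|) * laplacePDFReal r (x + d) := by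
        rw [exp_add, laplacePDFReal]
        ring

theorem integral_laplacePDFReal_mul_abs_pow (hr : 0 < r) (n : ℕ) :
    ∫ x, laplacePDFReal r x * |x| ^ n = n ! / r ^ n := by
  have hgamma := Real.integral_rpow_mul_exp_neg_mul_Ioi (a := n + 1) (by positivity) hr
  rw [Real.Gamma_nat_eq_factorial, add_sub_cancel_right] at hgamma
  simp only [← Nat.cast_add_one, Real.rpow_natCast] at hgamma
  calc ∫ x, laplacePDFReal r x * |x| ^ n
      = ∫ x, (fun y => r / 2 * (y ^ n * exp (-(r * y)))) |x| := by
        congr with x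
        rw [laplacePDFReal]
        ring
    _ = 2 * (r / 2 * ∫ y in Set.Ioi 0, y ^ n * exp (-(r * y))) := by
        rw [integral_comp_abs (f := fun y => r / 2 * (y ^ n * exp (-(r * y)))),
          integral_const_mul]
    _ = n ! / r ^ n := by
        rw [hgamma, one_div, inv_pow, pow_succ]
        field_simp

theorem lintegral_abs_pow_laplaceMeasure (hr : 0 < r) (n : ℕ) :
    ∫⁻ x, ENNReal.ofReal (|x| ^ n) ∂laplaceMeasure r = ENNReal.ofReal (n ! / r ^ n) := by
  have hint : Integrable fun x => laplacePDFReal r x * |x| ^ n :=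
    .of_integral_ne_zero (by rw [integral_laplacePDFReal_mul_abs_pow hr]; positivity)
  have hnonneg (x : ℝ) := laplacePDFReal_nonneg hr.le x
  rw [laplaceMeasure, lintegral_withDensity_eq_lintegral_mul _
    (measurable_laplacePDFReal r).ennreal_ofReal (by fun_prop)]
  simp_rw [Pi.mul_apply, ← ENNReal.ofReal_mul (hnonneg _)]
  rw [← ofReal_integral_eq_lintegral_ofReal hint (ae_of_all _ fun x => mul_nonneg (hnonneg x)
    (by positivity)), integral_laplacePDFReal_mul_abs_pow hr]

theorem isProbabilityMeasure_laplaceMeasure (hr : 0 < r) :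
    IsProbabilityMeasure (laplaceMeasure r) :=
  ⟨by simpa using lintegral_abs_pow_laplaceMeasure hr 0⟩

theorem satisfiesDP_laplaceMeasure (hr : 0 ≤ r) (δ Δ : ℝ) :
    SatisfiesDP (r * Δ) δ Δ (laplaceMeasure r) := by
  refine satisfiesDP_withDensity (fun d hd x => ?_) δ
  rw [← ENNReal.ofReal_mul (exp_pos _).le]
  refine ENNReal.ofReal_le_ofReal ((laplacePDFReal_le_exp_mul hr x d).trans ?_)
  gcongr
  exact laplacePDFReal_nonneg hr _

end Laplace

theorem VoptL2_le {ε Δ : ℝ} (hε : 0 < ε) (hΔ : 0 < Δ) (δ : ℝ) :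
    VoptL2 ε δ Δ ≤ ENNReal.ofReal (2 * Δ ^ 2 / ε ^ 2) := by
  have hr : 0 < ε / Δ := by positivity
  have hDP : SatisfiesDP ε δ Δ (laplaceMeasure (ε / Δ)) := by
    simpa [hΔ.ne'] using satisfiesDP_laplaceMeasure hr.le δ Δ
  calc VoptL2 ε δ Δ ≤ ∫⁻ x, ENNReal.ofReal (x ^ 2) ∂laplaceMeasure (ε / Δ) :=
        iInf₂_le_of_le _ (isProbabilityMeasure_laplaceMeasure hr) (iInf_le _ hDP)
    _ = ENNReal.ofReal (2 / (ε / Δ) ^ 2) := by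
        simpa using lintegral_abs_pow_laplaceMeasure hr 2
    _ = ENNReal.ofReal (2 * Δ ^ 2 / ε ^ 2) := by rw [div_pow, div_div_eq_mul_div]

theorem limsup_VoptL2_le {ε Δ : ℝ} (hε : 0 < ε) (hΔ : 0 < Δ) (l : Filter ℝ) :
    limsup (fun δ => VoptL2 ε δ Δ) l ≤ ENNReal.ofReal (2 * Δ ^ 2 / ε ^ 2) :=
  limsup_le_of_le (by isBoundedDefault) (.of_forall (VoptL2_le hε hΔ))

/-- For fixed ε > 0 and Δ > 0, as δ → 0⁺ the minimum noise power
satisfies liminf ≥ (1 + e^ε)Δ²/(e^ε − 1)² and limsup ≤ 2Δ²/ε², with multiplicative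
gap ε²(1 + e^ε)/(2(e^ε − 1)²). -/
theorem VoptL2_asymptotics_delta_to_zero
    (ε Δ : ℝ) (hε : 0 < ε) (hΔ : 0 < Δ) :
    Filter.liminf (fun δ : ℝ => VoptL2 ε δ Δ) (nhdsWithin 0 (Set.Ioi 0))
        ≥ ENNReal.ofReal ((1 + Real.exp ε) * Δ ^ 2 / (Real.exp ε - 1) ^ 2)
      ∧ Filter.limsup (fun δ : ℝ => VoptL2 ε δ Δ) (nhdsWithin 0 (Set.Ioi 0))
        ≤ ENNReal.ofReal (2 * Δ ^ 2 / ε ^ 2)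
      ∧ ((1 + Real.exp ε) * Δ ^ 2 / (Real.exp ε - 1) ^ 2) / (2 * Δ ^ 2 / ε ^ 2)
        = ε ^ 2 * (1 + Real.exp ε) / (2 * (Real.exp ε - 1) ^ 2) := by
  refine ⟨le_liminf_VoptL2 hε hΔ, limsup_VoptL2_le hε hΔ _, ?_⟩
  field_simp
end

section
/- Fix Δ > 0. In the regime δ = ε → 0, the minimum noise power satisfies lim_{ε → 0⁺} (ε²/Δ²)·V_opt^{L2}(ε, ε, Δ) = 2·(1 − 2·log(3/2) − log²(3/2)); that is, V_opt^{L2}(ε, ε, Δ) is asymptotically 2·(1 − 2·log(3/2) − log²(3/2))·Δ²/ε², and the lower and upper bounds on the minimum noise power are tight in this regime. -/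
open MeasureTheory Real Filter Topology

/-!
By scaling we may take `Δ = ε`. Fix a cutoff `t` with `exp ε - 1 = 2δ (exp t - 1)`, that is,
`1 / (exp t - 1) = 2δ / (exp ε - 1)`.

*Lower bound.* Applying the privacy constraint to the two half-lines `x ≥ y` and `x ≤ -y` bounds the
two-sided tail `G y = P {x | y ≤ |x|}` by `G y ≤ exp ε * G (y + ε) + 2δ`. After adding the constant
`1 / (exp t - 1)` to `G` the recursion becomes multiplicative, so `G` lies above an explicit
exponential, and `∫ x² dP = ∫ 2y G y dy` lies above an explicit function of `ε` and `t`.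

*Upper bound.* The density proportional to `exp (-|x|)` on `[-t, t]` satisfies the constraint: a
shift by at most `ε` changes it by a factor at most `exp ε`, except where it leaves the support, and
there the lost mass is at most `δ`.

The two bounds differ only by a factor `exp (-ε)` on one term. If `δ / ε → r`, then
`t → log (1 + 1 / (2r))`, which is `log (3 / 2)` on the diagonal.
-/

section Integrals

variable {a b : ℝ}

theorem ofReal_integral_le_lintegral_ofReal {α : Type*} [MeasurableSpace α] (μ : Measure α)
    (f : α → ℝ) : ENNReal.ofReal (∫ x, f x ∂μ) ≤ ∫⁻ x, ENNReal.ofReal (f x) ∂μ := by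
  by_cases hf : Integrable f μ
  · rw [integral_eq_lintegral_pos_part_sub_lintegral_neg_part hf]
    calc ENNReal.ofReal _
        ≤ ENNReal.ofReal (∫⁻ x, ENNReal.ofReal (f x) ∂μ).toReal :=
          ENNReal.ofReal_le_ofReal (sub_le_self _ ENNReal.toReal_nonneg)
      _ ≤ ∫⁻ x, ENNReal.ofReal (f x) ∂μ := ENNReal.ofReal_toReal_le
  · simp [integral_undef hf]

theorem setLIntegral_Ioc_ofReal_eq_ofReal_intervalIntegral {f : ℝ → ℝ}
    (hf : IntervalIntegrable f volume a b) (hf_nonneg : ∀ x ∈ Set.Ioc a b, 0 ≤ f x) (hab : a ≤ b) :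
    ∫⁻ x in Set.Ioc a b, ENNReal.ofReal (f x) = ENNReal.ofReal (∫ x in a..b, f x) := by
  rw [intervalIntegral.integral_of_le hab, ofReal_integral_eq_lintegral_ofReal hf.1]
  exact (ae_restrict_iff' measurableSet_Ioc).2 (Eventually.of_forall hf_nonneg)

theorem lintegral_comp_abs (f : ℝ → ENNReal) :
    ∫⁻ x, f |x| = 2 * ∫⁻ x in Set.Ioi 0, f x := by
  have h_pos : ∫⁻ x in Set.Ioi 0, f |x| = ∫⁻ x in Set.Ioi 0, f x :=
    setLIntegral_congr_fun measurableSet_Ioi fun x hx => by rw [abs_of_pos hx]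
  have h_neg : ∫⁻ x in Set.Iic 0, f |x| = ∫⁻ x in Set.Ioi 0, f x := by
    rw [← h_pos, ← (Measure.measurePreserving_neg volume).setLIntegral_comp_preimage_emb
      (MeasurableEquiv.neg ℝ).measurableEmbedding]
    simp only [Set.neg_preimage, Set.neg_Iic, neg_zero, abs_neg]
    exact setLIntegral_congr Ioi_ae_eq_Ici.symm
  rw [← lintegral_add_compl _ measurableSet_Iic, h_neg, Set.compl_Iic, h_pos, two_mul]

theorem integral_mul_exp_neg :
    ∫ x in a..b, x * exp (-x) = (a + 1) * exp (-a) - (b + 1) * exp (-b) := by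
  have h_deriv (x : ℝ) : HasDerivAt (fun x => -((x + 1) * exp (-x))) (x * exp (-x)) x := by
    refine (((hasDerivAt_id x).add_const 1).mul (hasDerivAt_neg x).exp).neg.congr_deriv ?_
    simp only [id]
    ring
  rw [intervalIntegral.integral_eq_sub_of_hasDerivAt (fun x _ => h_deriv x)
    ((by fun_prop : Continuous _).intervalIntegrable _ _)]
  ring

theorem integral_sq_mul_exp_neg :
    ∫ x in a..b, x ^ 2 * exp (-x) =
      (a ^ 2 + 2 * a + 2) * exp (-a) - (b ^ 2 + 2 * b + 2) * exp (-b) := by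
  have h_deriv (x : ℝ) :
      HasDerivAt (fun x => -((x ^ 2 + 2 * x + 2) * exp (-x))) (x ^ 2 * exp (-x)) x := by
    have h_poly := ((hasDerivAt_pow 2 x).add ((hasDerivAt_id x).const_mul 2)).add_const 2
    refine (h_poly.mul (hasDerivAt_neg x).exp).neg.congr_deriv ?_
    simp only [Pi.add_apply, Nat.cast_ofNat, Nat.add_one_sub_one, pow_one, mul_one, id_eq]
    ring
  rw [intervalIntegral.integral_eq_sub_of_hasDerivAt (fun x _ => h_deriv x)
    ((by fun_prop : Continuous _).intervalIntegrable _ _)]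
  ring

end Integrals

section SecondMoment

theorem lintegral_sq_eq_lintegral_meas_le_abs (P : Measure ℝ) :
    ∫⁻ x, ENNReal.ofReal (x ^ 2) ∂P =
      ∫⁻ y in Set.Ioi 0, P {x | y ≤ |x|} * ENNReal.ofReal (2 * y) := by
  rw [← lintegral_comp_eq_lintegral_meas_le_mul P (f := fun x => |x|) (g := fun y => 2 * y)
    (Eventually.of_forall abs_nonneg) (by fun_prop)
    (fun _ _ => (by fun_prop : Continuous _).intervalIntegrable _ _)]
  · refine lintegral_congr fun x => ?_
    rw [intervalIntegral.integral_const_mul, integral_id, sq_abs]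
    ring_nf
  · filter_upwards [ae_restrict_mem measurableSet_Ioi] with y hy
    exact mul_nonneg zero_le_two (le_of_lt hy)

theorem ofReal_integral_mul_le_lintegral_sq {P : Measure ℝ} [IsFiniteMeasure P] {g : ℝ → ℝ} {t : ℝ}
    (ht : 0 ≤ t) (hg : ∀ y, 0 ≤ y → g y ≤ P.real {x | y ≤ |x|}) :
    ENNReal.ofReal (∫ y in 0..t, g y * (2 * y)) ≤ ∫⁻ x, ENNReal.ofReal (x ^ 2) ∂P := by
  rw [lintegral_sq_eq_lintegral_meas_le_abs, intervalIntegral.integral_of_le ht]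
  calc ENNReal.ofReal (∫ y in Set.Ioc 0 t, g y * (2 * y))
      ≤ ∫⁻ y in Set.Ioc 0 t, ENNReal.ofReal (g y * (2 * y)) :=
        ofReal_integral_le_lintegral_ofReal _ _
    _ ≤ ∫⁻ y in Set.Ioc 0 t, P {x | y ≤ |x|} * ENNReal.ofReal (2 * y) := by
        refine setLIntegral_mono' measurableSet_Ioc fun y hy => ?_
        rw [ENNReal.ofReal_mul' (by linarith [hy.1]), ← ofReal_measureReal]
        gcongr
        exact hg y hy.1.le
    _ ≤ ∫⁻ y in Set.Ioi 0, P {x | y ≤ |x|} * ENNReal.ofReal (2 * y) :=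
        lintegral_mono_set Set.Ioc_subset_Ioi_self

end SecondMoment

section Scaling

variable {ε δ Δ a : ℝ} {P : Measure ℝ}

theorem SatisfiesDP.map_mul_left (hP : SatisfiesDP ε δ Δ P) (ha : 0 < a) :
    SatisfiesDP ε δ (a * Δ) (P.map (a * ·)) := by
  intro d hd S hS
  have hd' : |d / a| ≤ Δ := by
    rwa [abs_div, abs_of_pos ha, div_le_iff₀' ha]
  have h_shift : (a * ·) ⁻¹' ((· + d) '' S) = (· + d / a) '' ((a * ·) ⁻¹' S) := by
    ext x
    simp only [Set.image_add_right, Set.mem_preimage, mul_add, mul_neg, mul_div_cancel₀ d ha.ne']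
  have h_image : MeasurableSet ((· + d) '' S) :=
    (measurableEmbedding_addRight d).measurableSet_image.2 hS
  rw [Measure.map_apply (by fun_prop) hS, Measure.map_apply (by fun_prop) h_image, h_shift]
  exact hP _ hd' _ (measurable_const_mul a hS)

theorem VoptL2_mul_sensitivity_le (ε δ Δ : ℝ) (ha : 0 < a) :
    VoptL2 ε δ (a * Δ) ≤ ENNReal.ofReal (a ^ 2) * VoptL2 ε δ Δ := by
  have ha_sq : ENNReal.ofReal (a ^ 2) ≠ 0 := by simpa using ha.ne'
  simp only [VoptL2, ENNReal.mul_iInf_of_ne ha_sq ENNReal.ofReal_ne_top]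
  refine le_iInf fun P => le_iInf fun hP => le_iInf fun hDP => ?_
  refine iInf_le_of_le (P.map (a * ·)) <| iInf_le_of_le
    (Measure.isProbabilityMeasure_map (by fun_prop)) <|
    iInf_le_of_le (hDP.map_mul_left ha) (le_of_eq ?_)
  rw [lintegral_map (by fun_prop) (by fun_prop), ← lintegral_const_mul _ (by fun_prop)]
  simp only [mul_pow, ENNReal.ofReal_mul (sq_nonneg a)]

theorem VoptL2_mul_sensitivity (ε δ Δ : ℝ) (ha : 0 < a) :
    VoptL2 ε δ (a * Δ) = ENNReal.ofReal (a ^ 2) * VoptL2 ε δ Δ := by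
  refine le_antisymm (VoptL2_mul_sensitivity_le ε δ Δ ha) ?_
  calc ENNReal.ofReal (a ^ 2) * VoptL2 ε δ Δ
      = ENNReal.ofReal (a ^ 2) * VoptL2 ε δ (a⁻¹ * (a * Δ)) := by
        rw [inv_mul_cancel_left₀ ha.ne']
    _ ≤ ENNReal.ofReal (a ^ 2) * (ENNReal.ofReal (a⁻¹ ^ 2) * VoptL2 ε δ (a * Δ)) := by
        gcongr
        exact VoptL2_mul_sensitivity_le ε δ (a * Δ) (inv_pos.2 ha)
    _ = VoptL2 ε δ (a * Δ) := by
        rw [← mul_assoc, ← ENNReal.ofReal_mul (sq_nonneg a), ← mul_pow, mul_inv_cancel₀ ha.ne',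
          one_pow, ENNReal.ofReal_one, one_mul]

end Scaling

section NoisePowerBound

theorem exp_sub_one_pos {x : ℝ} (hx : 0 < x) : 0 < exp x - 1 :=
  sub_pos.2 (one_lt_exp_iff.2 hx)

/-- For noise of scale `1` and cutoff `t`, the lower bound on the noise power at privacy level `ε`;
`noisePowerBound 0 t` is the matching upper bound, namely the second moment of the Laplace
distribution conditioned on `[-t, t]`. -/
noncomputable def noisePowerBound (ε t : ℝ) : ℝ :=
  2 * exp (-ε) * (1 - t / (exp t - 1)) - t ^ 2 / (exp t - 1)

theorem tendsto_noisePowerBound {ι : Type*} {l : Filter ι} {ε t : ι → ℝ} {ε₀ t₀ : ℝ}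
    (hε : Tendsto ε l (𝓝 ε₀)) (ht : Tendsto t l (𝓝 t₀)) (ht₀ : 0 < t₀) :
    Tendsto (fun i => noisePowerBound (ε i) (t i)) l (𝓝 (noisePowerBound ε₀ t₀)) := by
  have h_exp : Tendsto (fun i => exp (t i) - 1) l (𝓝 (exp t₀ - 1)) := ht.rexp.sub_const 1
  have h_ne : exp t₀ - 1 ≠ 0 := (exp_sub_one_pos ht₀).ne'
  exact ((hε.neg.rexp.const_mul 2).mul ((ht.div h_exp h_ne).const_sub 1)).sub
    ((ht.pow 2).div h_exp h_ne)

end NoisePowerBound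

section LowerBound

variable {ε δ Δ t y : ℝ} {P : Measure ℝ}

theorem SatisfiesDP.measureReal_le [IsFiniteMeasure P] (hP : SatisfiesDP ε δ Δ P) (hδ : 0 ≤ δ)
    {d : ℝ} (hd : |d| ≤ Δ) {S : Set ℝ} (hS : MeasurableSet S) :
    P.real S ≤ exp ε * P.real ((· + d) '' S) + δ := by
  have h := ENNReal.toReal_mono (by finiteness) (hP d hd S hS)
  rwa [ENNReal.toReal_add (by finiteness) (by finiteness), ENNReal.toReal_mul,
    ENNReal.toReal_ofReal (exp_pos ε).le, ENNReal.toReal_ofReal hδ] at h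

theorem setOf_le_abs_eq_Ici_union_Iic (y : ℝ) : {x | y ≤ |x|} = Set.Ici y ∪ Set.Iic (-y) := by
  ext x
  simp only [Set.mem_ofPred_eq, Set.mem_union, Set.mem_Ici, Set.mem_Iic, le_abs, le_neg]

theorem SatisfiesDP.measureReal_le_abs_le [IsFiniteMeasure P] (hP : SatisfiesDP ε δ Δ P)
    (hδ : 0 ≤ δ) (hΔ : 0 < Δ) (hy : 0 ≤ y) :
    P.real {x | y ≤ |x|} ≤ exp ε * P.real {x | y + Δ ≤ |x|} + 2 * δ := by
  have h_right : P.real (Set.Ici y) ≤ exp ε * P.real (Set.Ici (y + Δ)) + δ := by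
    simpa only [Set.image_add_const_Ici] using
      hP.measureReal_le hδ (abs_of_pos hΔ).le measurableSet_Ici
  have h_left : P.real (Set.Iic (-y)) ≤ exp ε * P.real (Set.Iic (-(y + Δ))) + δ := by
    simpa only [Set.image_add_const_Iic, neg_add] using
      hP.measureReal_le hδ (by rw [abs_neg, abs_of_pos hΔ]) (measurableSet_Iic (a := -y))
  have h_disj : Disjoint (Set.Ici (y + Δ)) (Set.Iic (-(y + Δ))) :=
    (Set.Iic_disjoint_Ici.2 (by linarith)).symm
  rw [setOf_le_abs_eq_Ici_union_Iic, setOf_le_abs_eq_Ici_union_Iic,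
    measureReal_union h_disj measurableSet_Iic]
  linarith [measureReal_union_le (μ := P) (Set.Ici y) (Set.Iic (-y))]

theorem mul_exp_le_of_antitone_of_le_exp_mul {H : ℝ → ℝ} (hH : Antitone H) (hH0 : 0 ≤ H 0)
    (hε : 0 ≤ ε) (hΔ : 0 < Δ) (h_step : ∀ y, 0 ≤ y → H y ≤ exp ε * H (y + Δ)) (hy : 0 ≤ y) :
    H 0 * exp (-(ε * (y / Δ) + ε)) ≤ H y := by
  have h_iterate (k : ℕ) : H 0 ≤ exp (k * ε) * H (k * Δ) := by
    induction k with
    | zero => simp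
    | succ k ih =>
      calc H 0 ≤ exp (k * ε) * H (k * Δ) := ih
        _ ≤ exp (k * ε) * (exp ε * H (k * Δ + Δ)) := by
            gcongr
            exact h_step _ (by positivity)
        _ = exp ((k + 1 : ℕ) * ε) * H ((k + 1 : ℕ) * Δ) := by
            rw [← mul_assoc, ← exp_add]
            push_cast
            ring_nf
  set k := ⌈y / Δ⌉₊
  have hk_ge : y ≤ k * Δ := (div_le_iff₀ hΔ).1 (Nat.le_ceil _)
  have hk_lt : (k : ℝ) < y / Δ + 1 := Nat.ceil_lt_add_one (by positivity)
  calc H 0 * exp (-(ε * (y / Δ) + ε)) ≤ H 0 * exp (-(k * ε)) := by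
        gcongr
        nlinarith
    _ ≤ H (k * Δ) := by
        rw [exp_neg, ← div_eq_mul_inv, div_le_iff₀' (exp_pos _)]
        exact h_iterate k
    _ ≤ H y := hH hk_ge

theorem SatisfiesDP.le_measureReal_le_abs [IsProbabilityMeasure P] (hP : SatisfiesDP ε δ Δ P)
    (hε : 0 ≤ ε) (hδ : 0 ≤ δ) (hΔ : 0 < Δ) (ht : 0 < t)
    (h_cutoff : 2 * δ * (exp t - 1) ≤ exp ε - 1) (hy : 0 ≤ y) :
    (exp (t - ε - ε * (y / Δ)) - 1) / (exp t - 1) ≤ P.real {x | y ≤ |x|} := by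
  have h_pos : 0 < exp t - 1 := exp_sub_one_pos ht
  -- Scaling by `exp t - 1` turns the shift `1 / (exp t - 1)` into `1`.
  set H : ℝ → ℝ := fun y => (exp t - 1) * P.real {x | y ≤ |x|} + 1 with hH_def
  have hH_anti : Antitone H := fun y z hyz => by
    have h_mono : P.real {x | z ≤ |x|} ≤ P.real {x | y ≤ |x|} :=
      measureReal_mono fun x hx => hyz.trans hx
    simp only [hH_def]
    gcongr
  have hH_zero : H 0 = exp t := by simp [hH_def]
  have hH_step (y : ℝ) (hy : 0 ≤ y) : H y ≤ exp ε * H (y + Δ) := by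
    have h := mul_le_mul_of_nonneg_left (hP.measureReal_le_abs_le hδ hΔ hy) h_pos.le
    simp only [hH_def]
    linarith
  have h_exponent : t - ε - ε * (y / Δ) = t + -(ε * (y / Δ) + ε) := by ring
  have hH_lower : H 0 * exp (-(ε * (y / Δ) + ε)) ≤ H y :=
    mul_exp_le_of_antitone_of_le_exp_mul hH_anti (hH_zero ▸ (exp_pos t).le) hε hΔ hH_step hy
  rw [hH_zero, ← exp_add, ← h_exponent] at hH_lower
  rwa [div_le_iff₀' h_pos, sub_le_iff_le_add]

theorem ofReal_noisePowerBound_le_VoptL2_self (hε : 0 < ε) (hδ : 0 ≤ δ) (ht : 0 < t)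
    (h_cutoff : 2 * δ * (exp t - 1) ≤ exp ε - 1) :
    ENNReal.ofReal (noisePowerBound ε t) ≤ VoptL2 ε δ ε := by
  refine le_iInf fun P => le_iInf fun hP => le_iInf fun hDP => ?_
  have h_tail (y : ℝ) (hy : 0 ≤ y) :
      (exp (t - ε - y) - 1) / (exp t - 1) ≤ P.real {x | y ≤ |x|} := by
    simpa only [mul_div_cancel₀ y hε.ne'] using
      hDP.le_measureReal_le_abs hε.le hδ hε ht h_cutoff hy
  refine le_trans (le_of_eq ?_) (ofReal_integral_mul_le_lintegral_sq ht.le h_tail)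
  have h_pos : 0 < exp t - 1 := exp_sub_one_pos ht
  have h_integrand (y : ℝ) : (exp (t - ε - y) - 1) / (exp t - 1) * (2 * y) =
      2 * exp (t - ε) / (exp t - 1) * (y * exp (-y)) - 2 / (exp t - 1) * y := by
    rw [sub_eq_add_neg (t - ε) y, exp_add]
    ring
  simp only [h_integrand]
  rw [noisePowerBound,
    intervalIntegral.integral_sub ((by fun_prop : Continuous _).intervalIntegrable _ _)
      ((by fun_prop : Continuous _).intervalIntegrable _ _),
    intervalIntegral.integral_const_mul, intervalIntegral.integral_const_mul,
    integral_mul_exp_neg, integral_id, sub_eq_add_neg t ε, exp_add, exp_neg t]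
  congr 1
  simp only [neg_zero, exp_zero]
  field_simp
  ring

end LowerBound

section PrivateDensity

variable {ε δ Δ : ℝ} {f : ℝ → ENNReal}

theorem SatisfiesDP.withDensity (hf : Measurable f)
    (h : ∀ d, |d| ≤ Δ → ∃ R : Set ℝ, ∫⁻ x in R, f x ≤ ENNReal.ofReal δ ∧
      ∀ x ∉ R, f x ≤ ENNReal.ofReal (exp ε) * f (x + d)) :
    SatisfiesDP ε δ Δ (volume.withDensity f) := by
  intro d hd S _
  obtain ⟨R, hR, h_ratio⟩ := h d hd
  have h_shift : Measurable fun x => f (x + d) := hf.comp (measurable_add_const d)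
  rw [withDensity_apply' f S, withDensity_apply' f,
    ← (measurePreserving_add_right volume d).setLIntegral_comp_emb (measurableEmbedding_addRight d)]
  calc ∫⁻ x in S, f x ≤ ∫⁻ x in S \ R ∪ R, f x :=
        lintegral_mono_set (by rw [Set.sdiff_union_self]; exact Set.subset_union_left)
    _ ≤ (∫⁻ x in S \ R, f x) + ∫⁻ x in R, f x := lintegral_union_le _ _ _
    _ ≤ (∫⁻ x in S \ R, ENNReal.ofReal (exp ε) * f (x + d)) + ENNReal.ofReal δ :=
        add_le_add (setLIntegral_mono (h_shift.const_mul _) fun x hx => h_ratio x hx.2) hR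
    _ ≤ ENNReal.ofReal (exp ε) * (∫⁻ x in S, f (x + d)) + ENNReal.ofReal δ := by
        rw [lintegral_const_mul _ h_shift]
        gcongr
        exact Set.sdiff_subset

theorem SatisfiesDP.withDensity_of_even (hf : Measurable f) (hf_even : ∀ x, f (-x) = f x)
    (h : ∀ d, 0 ≤ d → d ≤ Δ → ∃ R : Set ℝ, ∫⁻ x in R, f x ≤ ENNReal.ofReal δ ∧
      ∀ x ∉ R, f x ≤ ENNReal.ofReal (exp ε) * f (x + d)) :
    SatisfiesDP ε δ Δ (volume.withDensity f) := by
  refine SatisfiesDP.withDensity hf fun d hd => ?_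
  rcases le_total 0 d with hd_nonneg | hd_nonpos
  · exact h d hd_nonneg (le_of_abs_le hd)
  obtain ⟨R, hR, h_ratio⟩ := h (-d) (neg_nonneg.2 hd_nonpos) ((neg_le_abs d).trans hd)
  refine ⟨Neg.neg ⁻¹' R, ?_, fun x hx => ?_⟩
  · rw [← (Measure.measurePreserving_neg volume).setLIntegral_comp_preimage_emb
      (MeasurableEquiv.neg ℝ).measurableEmbedding] at hR
    simpa only [hf_even] using hR
  · simpa only [← neg_add, hf_even] using h_ratio (-x) hx

end PrivateDensity

section TruncatedLaplace

variable {ε δ t : ℝ}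

/-- The density of the Laplace distribution of scale `1` conditioned on `[-t, t]`, used as the noise
distribution attaining the upper bound. It is written as a function of `|x|` so that its evenness is
definitional. -/
noncomputable def truncatedLaplacePDF (t x : ℝ) : ENNReal :=
  (Set.Iic t).indicator (fun r => ENNReal.ofReal (exp (-r) / (2 * (1 - exp (-t))))) |x|

@[fun_prop]
theorem measurable_truncatedLaplacePDF (t : ℝ) : Measurable (truncatedLaplacePDF t) :=
  (Measurable.indicator (by fun_prop) measurableSet_Iic).comp measurable_abs

theorem truncatedLaplacePDF_neg (t x : ℝ) :
    truncatedLaplacePDF t (-x) = truncatedLaplacePDF t x := by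
  simp only [truncatedLaplacePDF, abs_neg]

theorem truncatedLaplacePDF_of_lt_abs {x : ℝ} (hx : t < |x|) : truncatedLaplacePDF t x = 0 :=
  Set.indicator_of_notMem (Set.notMem_Iic.2 hx) _

theorem truncatedLaplacePDF_le (t x : ℝ) :
    truncatedLaplacePDF t x ≤ ENNReal.ofReal (exp (-|x|) / (2 * (1 - exp (-t)))) :=
  Set.indicator_le_self _ _ _

theorem one_sub_exp_neg (t : ℝ) : 1 - exp (-t) = (exp t - 1) / exp t := by
  rw [sub_div, div_self (exp_ne_zero t), one_div, exp_neg]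

theorem two_mul_one_sub_exp_neg_pos (ht : 0 < t) : 0 < 2 * (1 - exp (-t)) := by
  have : exp (-t) < 1 := exp_lt_one_iff.2 (neg_neg_of_pos ht)
  linarith

theorem truncatedLaplacePDF_le_exp_mul_add (ht : 0 < t) {x d : ℝ} (hd : |d| ≤ ε)
    (hxd : |x + d| ≤ t) :
    truncatedLaplacePDF t x ≤ ENNReal.ofReal (exp ε) * truncatedLaplacePDF t (x + d) := by
  have h_pos := two_mul_one_sub_exp_neg_pos ht
  refine (truncatedLaplacePDF_le t x).trans ?_
  rw [truncatedLaplacePDF, Set.indicator_of_mem (Set.mem_Iic.2 hxd),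
    ← ENNReal.ofReal_mul (exp_pos ε).le, ← mul_div_assoc, ← exp_add]
  gcongr
  linarith [abs_add_le x d]

theorem lintegral_comp_abs_truncatedLaplace (ht : 0 < t) {φ : ℝ → ℝ} (hφ : Continuous φ)
    (hφ_nonneg : ∀ x, 0 ≤ φ x) :
    ∫⁻ x, ENNReal.ofReal (φ |x|) ∂(volume.withDensity (truncatedLaplacePDF t)) =
      ENNReal.ofReal ((∫ x in 0..t, φ x * exp (-x)) / (1 - exp (-t))) := by
  have h_pos := two_mul_one_sub_exp_neg_pos ht
  have h_integrand (x : ℝ) : truncatedLaplacePDF t x * ENNReal.ofReal (φ |x|) =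
      (Set.Iic t).indicator
        (fun r => ENNReal.ofReal (φ r * exp (-r) / (2 * (1 - exp (-t))))) |x| := by
    rw [truncatedLaplacePDF, ← Set.indicator_mul_left _ _ fun r => ENNReal.ofReal (φ r)]
    congr 1
    ext r
    rw [← ENNReal.ofReal_mul (by positivity), mul_comm, mul_div_assoc]
  rw [lintegral_withDensity_eq_lintegral_mul _ (by fun_prop) (by fun_prop)]
  simp only [Pi.mul_apply, h_integrand]
  rw [lintegral_comp_abs, lintegral_indicator measurableSet_Iic,
    Measure.restrict_restrict measurableSet_Iic, Set.inter_comm, Set.Ioi_inter_Iic,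
    setLIntegral_Ioc_ofReal_eq_ofReal_intervalIntegral
      ((by fun_prop : Continuous _).intervalIntegrable _ _)
      (fun x _ => div_nonneg (mul_nonneg (hφ_nonneg x) (exp_pos _).le) h_pos.le) ht.le,
    intervalIntegral.integral_div, ← ENNReal.ofReal_ofNat, ← ENNReal.ofReal_mul zero_le_two]
  congr 1
  field_simp

theorem isProbabilityMeasure_truncatedLaplace (ht : 0 < t) :
    IsProbabilityMeasure (volume.withDensity (truncatedLaplacePDF t)) := by
  have h_pos := two_mul_one_sub_exp_neg_pos ht
  have h := lintegral_comp_abs_truncatedLaplace ht continuous_const fun _ => zero_le_one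
  refine ⟨?_⟩
  simpa [div_self (by linarith : 1 - exp (-t) ≠ 0)] using h

theorem lintegral_sq_truncatedLaplace (ht : 0 < t) :
    ∫⁻ x, ENNReal.ofReal (x ^ 2) ∂(volume.withDensity (truncatedLaplacePDF t)) =
      ENNReal.ofReal (noisePowerBound 0 t) := by
  have h := lintegral_comp_abs_truncatedLaplace ht (continuous_pow 2) sq_nonneg
  simp only [sq_abs] at h
  rw [h, integral_sq_mul_exp_neg, one_sub_exp_neg, noisePowerBound, exp_neg t]
  have h_exp : 0 < exp t - 1 := exp_sub_one_pos ht
  congr 1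
  simp only [neg_zero, exp_zero]
  field_simp
  ring

theorem setLIntegral_Ioi_truncatedLaplacePDF_le (hε : 0 ≤ ε) (ht : 0 < t) :
    ∫⁻ x in Set.Ioi (t - ε), truncatedLaplacePDF t x ≤
      ENNReal.ofReal ((exp ε - 1) / (2 * (exp t - 1))) := by
  have h_pos := two_mul_one_sub_exp_neg_pos ht
  have h_cover : Set.Ioi (t - ε) = Set.Ioc (t - ε) t ∪ Set.Ioi t :=
    (Set.Ioc_union_Ioi_eq_Ioi (by linarith)).symm
  have h_outside : ∫⁻ x in Set.Ioi t, truncatedLaplacePDF t x = 0 :=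
    setLIntegral_eq_zero measurableSet_Ioi fun x hx =>
      truncatedLaplacePDF_of_lt_abs (lt_of_lt_of_le hx (le_abs_self x))
  calc ∫⁻ x in Set.Ioi (t - ε), truncatedLaplacePDF t x
      ≤ ∫⁻ x in Set.Ioc (t - ε) t, truncatedLaplacePDF t x := by
        rw [h_cover, ← add_zero (∫⁻ x in Set.Ioc (t - ε) t, truncatedLaplacePDF t x), ← h_outside]
        exact lintegral_union_le _ _ _
    _ ≤ ∫⁻ x in Set.Ioc (t - ε) t, ENNReal.ofReal (exp (-x) / (2 * (1 - exp (-t)))) := by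
        refine lintegral_mono fun x => (truncatedLaplacePDF_le t x).trans ?_
        gcongr
        exact le_abs_self x
    _ = ENNReal.ofReal ((exp ε - 1) / (2 * (exp t - 1))) := by
        rw [setLIntegral_Ioc_ofReal_eq_ofReal_intervalIntegral
          ((by fun_prop : Continuous _).intervalIntegrable _ _) (fun x _ => by positivity)
          (by linarith), intervalIntegral.integral_div]
        simp only [intervalIntegral.integral_comp_neg, integral_exp]
        rw [one_sub_exp_neg, neg_sub, exp_sub, exp_neg]
        have h_exp : 0 < exp t - 1 := exp_sub_one_pos ht
        congr 1
        field_simp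

theorem satisfiesDP_truncatedLaplace (hε : 0 ≤ ε) (ht : 0 < t)
    (h_cutoff : exp ε - 1 ≤ 2 * δ * (exp t - 1)) :
    SatisfiesDP ε δ ε (volume.withDensity (truncatedLaplacePDF t)) := by
  have h_exp : 0 < exp t - 1 := exp_sub_one_pos ht
  refine SatisfiesDP.withDensity_of_even (by fun_prop) (truncatedLaplacePDF_neg t)
    fun d hd_nonneg hd_le => ⟨Set.Ioi (t - ε), ?_, fun x hx => ?_⟩
  · refine (setLIntegral_Ioi_truncatedLaplacePDF_le hε ht).trans (ENNReal.ofReal_le_ofReal ?_)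
    rw [div_le_iff₀ (by positivity)]
    linarith
  · have hx_le : x ≤ t - ε := Set.notMem_Ioi.1 hx
    rcases lt_or_ge x (-t) with hx_lt | hx_ge
    · rw [truncatedLaplacePDF_of_lt_abs (lt_abs.2 (Or.inr (by linarith)))]
      exact zero_le
    · exact truncatedLaplacePDF_le_exp_mul_add ht (by rwa [abs_of_nonneg hd_nonneg])
        (abs_le.2 ⟨by linarith, by linarith⟩)

theorem VoptL2_self_le_ofReal_noisePowerBound (hε : 0 ≤ ε) (ht : 0 < t)
    (h_cutoff : exp ε - 1 ≤ 2 * δ * (exp t - 1)) :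
    VoptL2 ε δ ε ≤ ENNReal.ofReal (noisePowerBound 0 t) :=
  iInf_le_of_le _ <| iInf_le_of_le (isProbabilityMeasure_truncatedLaplace ht) <|
    iInf_le_of_le (satisfiesDP_truncatedLaplace hε ht h_cutoff)
      (lintegral_sq_truncatedLaplace ht).le

end TruncatedLaplace

section FiniteBounds

variable {ε δ Δ : ℝ}

/-- The positive solution `t` of `exp ε - 1 = 2 * δ * (exp t - 1)`: the half-width, in units of the
noise scale `Δ / ε`, at which the lower and the upper bound on the noise power nearly meet. -/
noncomputable def laplaceCutoff (ε δ : ℝ) : ℝ :=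
  log (1 + (exp ε - 1) / (2 * δ))

theorem laplaceCutoff_pos (hε : 0 < ε) (hδ : 0 < δ) : 0 < laplaceCutoff ε δ := by
  have h_exp : 0 < exp ε - 1 := exp_sub_one_pos hε
  exact log_pos (lt_add_of_pos_right 1 (by positivity))

theorem two_mul_exp_laplaceCutoff_sub_one (hε : 0 < ε) (hδ : 0 < δ) :
    2 * δ * (exp (laplaceCutoff ε δ) - 1) = exp ε - 1 := by
  have h_exp : 0 < exp ε - 1 := exp_sub_one_pos hε
  rw [laplaceCutoff, exp_log (by positivity)]
  field_simp
  ring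

theorem scaled_VoptL2_mem_Icc (hε : 0 < ε) (hδ : 0 < δ) (hΔ : 0 < Δ) :
    ENNReal.ofReal (ε ^ 2 / Δ ^ 2) * VoptL2 ε δ Δ ∈
      Set.Icc (ENNReal.ofReal (noisePowerBound ε (laplaceCutoff ε δ)))
        (ENNReal.ofReal (noisePowerBound 0 (laplaceCutoff ε δ))) := by
  have h_pos := laplaceCutoff_pos hε hδ
  have h_cutoff := two_mul_exp_laplaceCutoff_sub_one hε hδ
  rw [← div_pow, ← VoptL2_mul_sensitivity ε δ Δ (div_pos hε hΔ), div_mul_cancel₀ ε hΔ.ne']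
  exact ⟨ofReal_noisePowerBound_le_VoptL2_self hε hδ.le h_pos h_cutoff.le,
    VoptL2_self_le_ofReal_noisePowerBound hε.le h_pos h_cutoff.ge⟩

end FiniteBounds

section Asymptotics

variable {ι : Type*} {l : Filter ι} {ε δ : ι → ℝ} {r : ℝ}

theorem noisePowerBound_zero_log (hr : 0 < r) :
    noisePowerBound 0 (log (1 + 1 / (2 * r))) =
      2 * (1 - 2 * r * log (1 + 1 / (2 * r)) - r * log (1 + 1 / (2 * r)) ^ 2) := by
  rw [noisePowerBound, exp_log (by positivity), add_sub_cancel_left, neg_zero, exp_zero]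
  field_simp

theorem tendsto_exp_sub_one_div :
    Tendsto (fun x : ℝ => (exp x - 1) / x) (𝓝[>] 0) (𝓝 1) := by
  simpa [div_eq_inv_mul] using (hasDerivAt_exp 0).tendsto_slope_zero_right

theorem tendsto_laplaceCutoff (hr : 0 < r) (hε : Tendsto ε l (𝓝[>] 0))
    (hδ : Tendsto (fun i => δ i / ε i) l (𝓝 r)) :
    Tendsto (fun i => laplaceCutoff (ε i) (δ i)) l (𝓝 (log (1 + 1 / (2 * r)))) := by
  have h_ratio : Tendsto (fun i => (exp (ε i) - 1) / ε i / (2 * (δ i / ε i))) l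
      (𝓝 (1 / (2 * r))) :=
    (tendsto_exp_sub_one_div.comp hε).div (hδ.const_mul 2) (by positivity)
  refine ((h_ratio.const_add 1).log (by positivity)).congr' ?_
  filter_upwards [hε.eventually self_mem_nhdsWithin] with i hi
  have hi_ne : ε i ≠ 0 := ne_of_gt hi
  rw [laplaceCutoff, ← mul_div_assoc, div_div_div_cancel_right₀ hi_ne]

theorem VoptL2_asymptotics_diagonal_general {Δ : ℝ} (hΔ : 0 < Δ) (hr : 0 < r)
    (hε : Tendsto ε l (𝓝[>] 0)) (hδ : Tendsto (fun i => δ i / ε i) l (𝓝 r)) :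
    Tendsto (fun i => ENNReal.ofReal (ε i ^ 2 / Δ ^ 2) * VoptL2 (ε i) (δ i) Δ) l
      (𝓝 (ENNReal.ofReal (2 * (1 - 2 * r * log (1 + 1 / (2 * r)) -
        r * log (1 + 1 / (2 * r)) ^ 2)))) := by
  have h_cutoff := tendsto_laplaceCutoff hr hε hδ
  have h_limit_pos : 0 < log (1 + 1 / (2 * r)) :=
    log_pos (lt_add_of_pos_right 1 (by positivity))
  have h_lower := tendsto_noisePowerBound (hε.mono_right nhdsWithin_le_nhds) h_cutoff h_limit_pos
  have h_upper := tendsto_noisePowerBound (tendsto_const_nhds (x := 0)) h_cutoff h_limit_pos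
  rw [noisePowerBound_zero_log hr] at h_lower h_upper
  have hε_pos : ∀ᶠ i in l, 0 < ε i := hε.eventually self_mem_nhdsWithin
  have hδ_pos : ∀ᶠ i in l, 0 < δ i := by
    filter_upwards [hε_pos, hδ.eventually_const_lt hr] with i hεi h_ratio
    exact (div_pos_iff_of_pos_right hεi).1 h_ratio
  have h_bounds := (hε_pos.and hδ_pos).mono fun i hi => scaled_VoptL2_mem_Icc hi.1 hi.2 hΔ
  exact tendsto_of_tendsto_of_tendsto_of_le_of_le' (ENNReal.tendsto_ofReal h_lower)
    (ENNReal.tendsto_ofReal h_upper) (h_bounds.mono fun _ h => h.1) (h_bounds.mono fun _ h => h.2)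

end Asymptotics

/-- For fixed Δ > 0, in the regime δ = ε → 0⁺ the minimum noise power
satisfies lim (ε²/Δ²)·V_opt^{L2}(ε, ε, Δ) = 2(1 − 2 log(3/2) − log²(3/2)). -/
theorem VoptL2_asymptotics_diagonal
    (Δ : ℝ) (hΔ : 0 < Δ) :
    Tendsto (fun ε : ℝ => ENNReal.ofReal (ε ^ 2 / Δ ^ 2) * VoptL2 ε ε Δ)
      (nhdsWithin 0 (Set.Ioi 0))
      (nhds (ENNReal.ofReal
        (2 * (1 - 2 * Real.log (3 / 2) - (Real.log (3 / 2)) ^ 2)))) := by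
  have h_ratio : Tendsto (fun ε : ℝ => ε / ε) (𝓝[>] 0) (𝓝 1) :=
    tendsto_const_nhds.congr' <| by
      filter_upwards [self_mem_nhdsWithin] with ε hε using (div_self (ne_of_gt hε)).symm
  have h_log : log (1 + 1 / 2) = log (3 / 2) := by norm_num
  simpa only [mul_one, one_mul, h_log, id] using
    VoptL2_asymptotics_diagonal_general hΔ one_pos tendsto_id h_ratio
end
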